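/- arXiv:1701.06592 — 6 statements merged into one kernel-verified Lean document; each statement's English description precedes it below -/
import Mathlib

section
/- A (g,r,d)-sequence δ is extendable if and only if the number of occurrences of 0 in δ is at most one more than the number of occurrences of r in δ. -/
/-!
The last condition in the definition of a `(g,r,d)`-sequence is a ballot condition: it says that
in every prefix the numbers of occurrences satisfy `c_0 ≥ c_1 ≥ … ≥ c_r`
(`Ballot.count_le`). The `c_j` add up to the length of the sequence (`sum_count_eq_length`).

If `c_0 ≤ c_r + 1`, the sequence can be continued forever while keeping this inequality: append
the smallest `x` with `c_x = c_r` (`exists_balanced_extension`). A sequence of length `g'` with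
`c_0 ≤ c_r + 1` has `g' ≤ r (c_r + 1) + c_r < (r+1)(c_r+1)`, so whenever `(r+1) k ≤ g'` each
integer occurs at least `c_r ≥ k` times.

Conversely, suppose `c_0 ≥ c_r + 2`; put `k = c_0 - 1` and `g' = max(g, (r+1)k)`, and choose `d'`
with `r + g' - d' = k`. If `g' = g`, nothing may be appended, while `r` occurs fewer than `k`
times. If `g' = (r+1)k`, every integer would have to occur exactly `k` times, while `0` already
occurs `k + 1` times. So `δ` is not extendable.
-/

/-- A `(g,r,d)`-sequence: for integers `g, r, d > 0` with `g ≥ (r+1)(r+g−d)`, a finite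
sequence `δ_1, …, δ_g` of integers with `0 ≤ δ_i ≤ r`, such that each integer `j` with
`0 ≤ j ≤ r` occurs at least `r+g−d` times, and for each `i`, no integer strictly less
than `δ_i` occurs among `δ_1,…,δ_i` strictly fewer times than `δ_i` does. -/
def IsGRDSeq (g r d : ℕ) (δ : List ℕ) : Prop :=
  0 < g ∧ 0 < r ∧ 0 < d ∧
  ((r : ℤ) + 1) * ((r : ℤ) + (g : ℤ) - (d : ℤ)) ≤ (g : ℤ) ∧
  δ.length = g ∧
  (∀ x ∈ δ, x ≤ r) ∧
  (∀ j : ℕ, j ≤ r → (r : ℤ) + (g : ℤ) - (d : ℤ) ≤ (δ.count j : ℤ)) ∧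
  (∀ i : ℕ, ∀ hi : i < δ.length, ∀ j' : ℕ, j' < δ[i] →
    (δ.take (i + 1)).count (δ[i]) ≤ (δ.take (i + 1)).count j')

/-- `aVal δ i j` is the quantity `a^i_j = j + (i−1) − #{i' < i : δ_{i'} = j}`
(indices `i` starting from 1), satisfying `a^1_j = j` and `a^{i+1}_j = a^i_j + 1`
if `j ≠ δ_i`, `a^{i+1}_j = a^i_j` if `j = δ_i`. -/
def aVal (δ : List ℕ) (i j : ℕ) : ℤ :=
  (j : ℤ) + ((i : ℤ) - 1) - ((δ.take (i - 1)).count j : ℤ)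

/-- `bVal δ d i j` is `b^i_j = d − a^i_j` if `j = δ_i` and `d − 1 − a^i_j` otherwise. -/
def bVal (δ : List ℕ) (d i j : ℕ) : ℤ :=
  if δ.getD (i - 1) (j + 1) = j then (d : ℤ) - aVal δ i j else (d : ℤ) - 1 - aVal δ i j

/-- The pair `(w', w)` of tuples `(c'_2,…,c'_g)`, `(c_2,…,c_g)` is steady if there is an
index `i` with `c'_j − c_j ≤ 0` for `j ≥ i` and `c'_j − c_j ≥ 0` for `j < i`. -/
def Steady (g : ℕ) (c' c : ℕ → ℤ) : Prop :=
  ∃ i : ℕ, ∀ j : ℕ, 2 ≤ j → j ≤ g →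
    (i ≤ j → c' j - c j ≤ 0) ∧ (j < i → 0 ≤ c' j - c j)

/-- A tuple `w = (c_2,…,c_g)` is unimaginative (for a given `m`) if
`c_{i+1} − c_i ≥ m` for `i = 2,…,g−1`. -/
def Unimaginative (g m : ℕ) (c : ℕ → ℤ) : Prop :=
  ∀ i : ℕ, 2 ≤ i → i ≤ g - 1 → (m : ℤ) ≤ c (i + 1) - c i

open scoped Classical in
/-- `eps g c' c i` is `ε^i_{w',w}`: it is `1` when
`Σ_{j=i+1}^{g} (c'_j − c_j) = min_{1 ≤ i' ≤ g} Σ_{j=i'+1}^{g} (c'_j − c_j)`,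
and `0` otherwise. -/
noncomputable def eps (g : ℕ) (c' c : ℕ → ℤ) (i : ℕ) : ℕ :=
  if ∀ i' ∈ Finset.Icc 1 g,
      (∑ j ∈ Finset.Icc (i + 1) g, (c' j - c j)) ≤ ∑ j ∈ Finset.Icc (i' + 1) g, (c' j - c j)
  then 1 else 0

/-- The ballot condition on a sequence: when a term is placed, its number of occurrences so far
does not exceed that of any smaller integer. -/
def Ballot (l : List ℕ) : Prop :=
  ∀ i : ℕ, ∀ hi : i < l.length, ∀ j' : ℕ, j' < l[i] →
    (l.take (i + 1)).count (l[i]) ≤ (l.take (i + 1)).count j'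

lemma ballot_append_singleton (l : List ℕ) (x : ℕ) :
    Ballot (l ++ [x]) ↔ Ballot l ∧ ∀ j < x, l.count x + 1 ≤ l.count j := by
  constructor
  · intro h
    refine ⟨fun i hi j hj => ?_, fun j hj => ?_⟩
    · have := h i (by simp; omega) j (by rwa [List.getElem_append_left hi])
      rwa [List.getElem_append_left hi, List.take_append_of_le_length (by omega)] at this
    · have := h l.length (by simp) j (by simpa using hj)
      simpa [List.take_of_length_le, List.count_append, hj.ne'] using this
  · rintro ⟨h, hx⟩ i hi j hj
    rcases Nat.lt_or_ge i l.length with hil | hil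
    · rw [List.getElem_append_left hil] at hj ⊢
      rw [List.take_append_of_le_length (by omega)]
      exact h i hil j hj
    · have hi' : i = l.length := by simp at hi; omega
      subst hi'
      have hj' : j < x := by simpa using hj
      simpa [List.take_of_length_le, List.count_append, hj'.ne'] using hx j hj'

lemma Ballot.count_le {l : List ℕ} (h : Ballot l) {i j : ℕ} (hij : i ≤ j) :
    l.count j ≤ l.count i := by
  induction l using List.reverseRecOn with
  | nil => simp
  | append_singleton l x ih =>
    obtain ⟨hl, hx⟩ := (ballot_append_singleton l x).1 h
    have h1 := ih hl
    rcases hij.eq_or_lt with rfl | hlt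
    · rfl
    · by_cases hjx : x = j
      · subst hjx
        have := hx i hlt
        simp [List.count_append, hlt.ne']
        omega
      · simp [List.count_append, List.count_singleton, hjx]
        omega

lemma sum_count_eq_length {l : List ℕ} {r : ℕ} (h : ∀ x ∈ l, x ≤ r) :
    ∑ j ∈ Finset.range (r + 1), l.count j = l.length := by
  have := Multiset.sum_count_eq_card (s := Finset.range (r + 1)) (m := (l : Multiset ℕ))
    (fun a ha => by simpa [Nat.lt_succ_iff] using h a (by simpa using ha))
  simpa using this

/-- A ballot sequence in `{0,…,r}` in which `0` occurs at most once more than `r` can be prolonged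
by any number of terms to a sequence with the same properties. -/
lemma exists_balanced_extension {r : ℕ} (l : List ℕ) (hle : ∀ x ∈ l, x ≤ r)
    (hb : Ballot l) (hc : l.count 0 ≤ l.count r + 1) (n : ℕ) :
    ∃ e : List ℕ, e.length = n ∧ (∀ x ∈ l ++ e, x ≤ r) ∧ Ballot (l ++ e) ∧
      (l ++ e).count 0 ≤ (l ++ e).count r + 1 := by
  induction n with
  | zero => exact ⟨[], rfl, by simpa using hle, by simpa using hb, by simpa using hc⟩
  | succ n ih =>
    obtain ⟨e, he, h1, h2, h3⟩ := ih
    generalize hm : l ++ e = m at h1 h2 h3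
    -- The term to append: the smallest `x` occurring as often as `r`.
    have hex : ∃ x, m.count x = m.count r := ⟨r, rfl⟩
    obtain ⟨x, hx, hmin⟩ : ∃ x, m.count x = m.count r ∧ ∀ y < x, m.count y ≠ m.count r :=
      ⟨Nat.find hex, Nat.find_spec hex, fun y hy => Nat.find_min hex hy⟩
    have hxr : x ≤ r := by
      by_contra hcon
      exact hmin r (by omega) rfl
    refine ⟨e ++ [x], by simp [he], ?_, ?_, ?_⟩ <;> rw [← List.append_assoc, hm]
    · intro y hy
      rcases List.mem_append.1 hy with hy | hy
      · exact h1 y hy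
      · rw [List.mem_singleton.1 hy]
        exact hxr
    · refine (ballot_append_singleton m x).2 ⟨h2, fun j hj => ?_⟩
      have := hmin j hj
      have := h2.count_le (hj.le.trans hxr)
      omega
    · rw [List.count_append, List.count_append]
      by_cases hx0 : x = 0
      · subst hx0
        simp
        omega
      · simp [hx0]
        omega

theorem stmt_2 (g r d : ℕ) (δ : List ℕ) (h : IsGRDSeq g r d δ) :
    (∀ g' d' : ℕ, g ≤ g' → 0 < d' →
        ((r : ℤ) + 1) * ((r : ℤ) + (g' : ℤ) - (d' : ℤ)) ≤ (g' : ℤ) →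
        ∃ ext : List ℕ, ext.length = g' - g ∧ IsGRDSeq g' r d' (δ ++ ext))
      ↔ δ.count 0 ≤ δ.count r + 1 := by
  obtain ⟨hg, hr, hd, hgrd, hlen, hle, hcnt, hb⟩ := h
  constructor
  · intro hext
    by_contra hcon
    obtain ⟨k, hk⟩ : ∃ k, δ.count 0 = k + 1 := ⟨δ.count 0 - 1, by omega⟩
    obtain ⟨g', hg'⟩ : ∃ g', g' = max g ((r + 1) * k) := ⟨_, rfl⟩
    have hgg : g ≤ g' := hg' ▸ le_max_left _ _
    have hkg : (r + 1) * k ≤ g' := hg' ▸ le_max_right _ _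
    have hkg1 : k ≤ g' := le_trans (Nat.le_mul_of_pos_left k (by omega)) hkg
    -- With `d' = r + g' - k`, every integer in `{0,…,r}` must occur at least `k` times.
    have hval : (r : ℤ) + (g' : ℤ) - ((r + g' - k : ℕ) : ℤ) = k := by omega
    obtain ⟨e, he, -, -, -, -, hl, hle', hc', -⟩ := hext g' (r + g' - k) hgg (by omega)
      (by rw [hval]; exact_mod_cast hkg)
    rw [hval] at hc'
    have hc'' : ∀ j ≤ r, k ≤ (δ ++ e).count j := fun j hj => by exact_mod_cast hc' j hj
    rcases le_total g ((r + 1) * k) with hcase | hcase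
    · rw [max_eq_right hcase] at hg'
      have hsum := sum_count_eq_length hle'
      have hlt : ∑ j ∈ Finset.range (r + 1), k
          < ∑ j ∈ Finset.range (r + 1), (δ ++ e).count j := by
        refine Finset.sum_lt_sum (fun j hj => hc'' j (by simpa [Nat.lt_succ_iff] using hj))
          ⟨0, by simp, ?_⟩
        rw [List.count_append]
        omega
      rw [hsum, hl, hg'] at hlt
      simp at hlt
    · rw [max_eq_left hcase] at hg'
      have he0 : e = [] := List.length_eq_zero_iff.1 (by omega)
      have := hc'' r le_rfl
      rw [he0, List.append_nil] at this
      omega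
  · intro hc g' d' hgg hd' hgrd'
    obtain ⟨e, he, h1, h2, h3⟩ := exists_balanced_extension δ hle hb hc (g' - g)
    have hl : (δ ++ e).length = g' := by simp [hlen, he]; omega
    refine ⟨e, he, by omega, hr, hd', hgrd', hl, h1, fun j hj => ?_, h2⟩
    have hsum := sum_count_eq_length h1
    rw [hl] at hsum
    have hlt : ∑ j ∈ Finset.range (r + 1), (δ ++ e).count j
        < ∑ j ∈ Finset.range (r + 1), ((δ ++ e).count r + 1) := by
      refine Finset.sum_lt_sum (fun j _ => (h2.count_le (Nat.zero_le j)).trans h3)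
        ⟨r, by simp, Nat.lt_succ_self _⟩
    rw [hsum] at hlt
    simp only [Finset.sum_const, Finset.card_range, smul_eq_mul] at hlt
    have hlt' : (g' : ℤ) < ((r : ℤ) + 1) * (((δ ++ e).count r : ℤ) + 1) := by exact_mod_cast hlt
    have hk := lt_of_mul_lt_mul_left (hgrd'.trans_lt hlt') (by positivity)
    have := h2.count_le hj
    omega
end

section
/- Let δ be a (g,r,d)-sequence, let m ≥ 2 be an integer, and let w = (c_2,…,c_g) be an unimaginative tuple of integers for m. Then for every nondecreasing m-tuple \vec{j} = (j_1 ≤ … ≤ j_m) with entries in {0,…,r}, the pair ((a^2_{\vec{j}},…,a^g_{\vec{j}}), w) is steady. -/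
/-- Holds because the number of occurrences of `j` in a prefix of `δ` grows with the prefix. -/
lemma aVal_succ_le (δ : List ℕ) (i j : ℕ) : aVal δ (i + 1) j ≤ aVal δ i j + 1 := by
  have hcount : (δ.take (i - 1)).count j ≤ (δ.take i).count j :=
    (List.take_sublist_take_left (by omega)).count_le j
  simp only [aVal, Nat.add_sub_cancel]
  push_cast
  omega

/-- A difference that is nonincreasing on `2, …, g` changes sign at most once. -/
lemma steady_of_step (g : ℕ) (c' c : ℕ → ℤ)
    (hstep : ∀ i, 2 ≤ i → i < g → c' (i + 1) - c (i + 1) ≤ c' i - c i) : Steady g c' c := by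
  classical
  have hanti : ∀ i j, 2 ≤ i → i ≤ j → j ≤ g → c' j - c j ≤ c' i - c i := by
    intro i j hi hij
    induction j, hij using Nat.le_induction with
    | base => exact fun _ => le_rfl
    | succ k hk ih =>
      exact fun hkg => (hstep k (by omega) (by omega)).trans (ih (by omega))
  by_cases hex : ∃ i, 2 ≤ i ∧ i ≤ g ∧ c' i - c i ≤ 0
  · refine ⟨Nat.find hex, fun j hj hjg => ⟨fun hij => ?_, fun hji => ?_⟩⟩
    · obtain ⟨h2, -, hle⟩ := Nat.find_spec hex
      exact (hanti _ j h2 hij hjg).trans hle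
    · by_contra hneg
      exact Nat.find_min hex hji ⟨hj, hjg, by omega⟩
  · refine ⟨g + 1, fun j hj hjg => ⟨fun hij => by omega, fun _ => ?_⟩⟩
    by_contra hneg
    exact hex ⟨j, hj, hjg, by omega⟩

theorem stmt_5 (g r d m : ℕ) (δ : List ℕ) (h : IsGRDSeq g r d δ) (hm : 2 ≤ m)
    (c : ℕ → ℤ) (hc : Unimaginative g m c)
    (jvec : Fin m → ℕ) (hmono : Monotone jvec) (hjr : ∀ n, jvec n ≤ r) :
    Steady g (fun i => ∑ n : Fin m, aVal δ i (jvec n)) c := by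
  refine steady_of_step g _ c fun i hi hig => ?_
  have hsum : ∑ n : Fin m, aVal δ (i + 1) (jvec n) ≤ ∑ n : Fin m, aVal δ i (jvec n) + m := by
    calc ∑ n : Fin m, aVal δ (i + 1) (jvec n)
        ≤ ∑ n : Fin m, (aVal δ i (jvec n) + 1) :=
          Finset.sum_le_sum fun n _ => aVal_succ_le δ i (jvec n)
      _ = ∑ n : Fin m, aVal δ i (jvec n) + m := by
          simp [Finset.sum_add_distrib]
  have hci := hc i hi (by omega)
  omega
end

section
/- Let g ≥ 2 and let w = (c_2,…,c_g), w' = (c'_2,…,c'_g) be tuples of integers such that the signs of c'_i − c_i are weakly decreasing in i; that is, for all 2 ≤ i < i' ≤ g it is not the case that c'_i − c_i = 0 and c'_{i'} − c_{i'} > 0, nor that c'_i − c_i < 0 and c'_{i'} − c_{i'} ≥ 0. Then for every 1 ≤ i ≤ g, one has ε^i_{w',w} = 1 if and only if (i = 1 or c'_i ≥ c_i) and (i = g or c'_{i+1} ≤ c_{i+1}). -/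
lemma tail_sum_split (d : ℕ → ℤ) {a b g : ℕ} (hab : a ≤ b) (hbg : b ≤ g) :
    ∑ j ∈ Finset.Icc (a + 1) g, d j
      = ∑ j ∈ Finset.Icc (a + 1) b, d j + ∑ j ∈ Finset.Icc (b + 1) g, d j := by
  rw [← Finset.sum_union]
  · congr 1
    ext j
    simp only [Finset.mem_union, Finset.mem_Icc]
    omega
  · rw [Finset.disjoint_left]
    intro j
    simp only [Finset.mem_Icc]
    omega

theorem stmt_8 (g : ℕ) (hg : 2 ≤ g) (c c' : ℕ → ℤ)
    (hsign : ∀ i i' : ℕ, 2 ≤ i → i < i' → i' ≤ g →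
      ¬(c' i - c i = 0 ∧ 0 < c' i' - c i') ∧ ¬(c' i - c i < 0 ∧ 0 ≤ c' i' - c i')) :
    ∀ i : ℕ, 1 ≤ i → i ≤ g →
      (eps g c' c i = 1 ↔ ((i = 1 ∨ c i ≤ c' i) ∧ (i = g ∨ c' (i + 1) ≤ c (i + 1)))) := by
  intro i hi1 hig
  have heps : eps g c' c i = 1 ↔ ∀ i' ∈ Finset.Icc 1 g,
      (∑ j ∈ Finset.Icc (i + 1) g, (c' j - c j))
        ≤ ∑ j ∈ Finset.Icc (i' + 1) g, (c' j - c j) := by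
    unfold eps
    split_ifs with h
    · exact iff_of_true rfl h
    · exact iff_of_false (by simp) h
  rw [heps]
  constructor
  · intro h
    constructor
    · by_cases h1 : i = 1
      · exact Or.inl h1
      · obtain ⟨k, rfl⟩ : ∃ k, i = k + 1 := ⟨i - 1, by omega⟩
        have hk := h k (Finset.mem_Icc.2 ⟨by omega, by omega⟩)
        rw [tail_sum_split (fun j => c' j - c j) (Nat.le_succ k) hig] at hk
        simp at hk
        exact Or.inr hk
    · by_cases h1 : i = g
      · exact Or.inl h1
      · have hk := h (i + 1) (Finset.mem_Icc.2 ⟨by omega, by omega⟩)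
        rw [tail_sum_split (fun j => c' j - c j) (Nat.le_succ i) (by omega : i + 1 ≤ g)] at hk
        simp at hk
        exact Or.inr hk
  · rintro ⟨hl, hr⟩ k hk
    rw [Finset.mem_Icc] at hk
    rcases le_total k i with hki | hik
    · rw [tail_sum_split (fun j => c' j - c j) hki hig]
      refine le_add_of_nonneg_left (Finset.sum_nonneg fun j hj => ?_)
      rw [Finset.mem_Icc] at hj
      rcases hj.2.eq_or_lt with rfl | hji
      · omega
      · have := (hsign j i (by omega) hji hig).2
        omega
    · rw [tail_sum_split (fun j => c' j - c j) hik hk.2]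
      refine add_le_of_nonpos_left (Finset.sum_nonpos fun j hj => ?_)
      rw [Finset.mem_Icc] at hj
      rcases hj.1.eq_or_lt with rfl | hji
      · omega
      · have := hsign (i + 1) j (by omega) hji (by omega)
        omega
end

section
/- Let g ≥ 2 and let w = (c_2,…,c_g), w' = (c'_2,…,c'_g) be tuples of integers such that the signs of c'_i − c_i are weakly decreasing in i; that is, for all 2 ≤ i < i' ≤ g it is not the case that c'_i − c_i = 0 and c'_{i'} − c_{i'} > 0, nor that c'_i − c_i < 0 and c'_{i'} − c_{i'} ≥ 0. Then the set {i : 1 ≤ i ≤ g and ε^i_{w',w} = 1} is nonempty and consists of consecutive integers (i.e., if ε^{i_1}_{w',w} = 1 and ε^{i_2}_{w',w} = 1 and i_1 ≤ i ≤ i_2, then ε^i_{w',w} = 1). -/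
theorem tailSum_split (f : ℕ → ℤ) {a b g : ℕ} (hab : a ≤ b) (hbg : b ≤ g) :
    ∑ j ∈ Finset.Icc (a + 1) g, f j =
      ∑ j ∈ Finset.Icc (a + 1) b, f j + ∑ j ∈ Finset.Icc (b + 1) g, f j := by
  have h : ∀ x y : ℕ, Finset.Icc (x + 1) y = Finset.Ioc x y := by
    intro x y
    ext
    simp
  rw [h, h, h, Finset.sum_Ioc_consecutive f hab hbg]

/-- Tail sums of a sequence in which every term after a negative one is negative are
quasi-convex. -/
theorem tailSum_quasiconvex (f : ℕ → ℤ) {g i₁ i i₂ : ℕ}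
    (hf : ∀ j k : ℕ, 2 ≤ j → j < k → k ≤ g → f j < 0 → f k < 0)
    (h₁ : 1 ≤ i₁) (h₂ : i₂ ≤ g) (h₁i : i₁ ≤ i) (hi₂ : i ≤ i₂) :
    ∑ j ∈ Finset.Icc (i + 1) g, f j ≤ ∑ j ∈ Finset.Icc (i₁ + 1) g, f j ∨
      ∑ j ∈ Finset.Icc (i + 1) g, f j ≤ ∑ j ∈ Finset.Icc (i₂ + 1) g, f j := by
  by_cases hneg : ∃ j ∈ Finset.Icc (i₁ + 1) i, f j < 0
  · obtain ⟨j, hj, hjneg⟩ := hneg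
    rw [Finset.mem_Icc] at hj
    right
    rw [tailSum_split f hi₂ h₂]
    have : ∑ k ∈ Finset.Icc (i + 1) i₂, f k ≤ 0 := by
      refine Finset.sum_nonpos fun k hk => ?_
      rw [Finset.mem_Icc] at hk
      exact (hf j k (by omega) (by omega) (by omega) hjneg).le
    linarith
  · push Not at hneg
    left
    rw [tailSum_split f h₁i (hi₂.trans h₂)]
    have := Finset.sum_nonneg hneg
    linarith

theorem eps_eq_one_iff (g : ℕ) (c' c : ℕ → ℤ) (i : ℕ) :
    eps g c' c i = 1 ↔ ∀ i' ∈ Finset.Icc 1 g,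
      (∑ j ∈ Finset.Icc (i + 1) g, (c' j - c j)) ≤
        ∑ j ∈ Finset.Icc (i' + 1) g, (c' j - c j) := by
  unfold eps
  split_ifs with h
  · exact ⟨fun _ => h, fun _ => rfl⟩
  · exact ⟨fun h0 => absurd h0 (by decide), fun h' => absurd h' h⟩

theorem stmt_9 (g : ℕ) (hg : 2 ≤ g) (c c' : ℕ → ℤ)
    (hsign : ∀ i i' : ℕ, 2 ≤ i → i < i' → i' ≤ g →
      ¬(c' i - c i = 0 ∧ 0 < c' i' - c i') ∧ ¬(c' i - c i < 0 ∧ 0 ≤ c' i' - c i')) :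
    (∃ i : ℕ, 1 ≤ i ∧ i ≤ g ∧ eps g c' c i = 1) ∧
    (∀ i₁ i i₂ : ℕ, 1 ≤ i₁ → i₂ ≤ g → eps g c' c i₁ = 1 → eps g c' c i₂ = 1 →
      i₁ ≤ i → i ≤ i₂ → eps g c' c i = 1) := by
  simp only [eps_eq_one_iff]
  constructor
  · obtain ⟨i, hi, hmin⟩ := Finset.exists_min_image (Finset.Icc 1 g)
      (fun i => ∑ j ∈ Finset.Icc (i + 1) g, (c' j - c j)) ⟨1, Finset.mem_Icc.2 ⟨le_rfl, by omega⟩⟩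
    rw [Finset.mem_Icc] at hi
    exact ⟨i, hi.1, hi.2, hmin⟩
  · intro i₁ i i₂ h₁ h₂ hmin₁ hmin₂ h₁i hi₂ i' hi'
    have hf : ∀ j k : ℕ, 2 ≤ j → j < k → k ≤ g → c' j - c j < 0 → c' k - c k < 0 :=
      fun j k hj hjk hk hneg => not_le.1 fun h => (hsign j k hj hjk hk).2 ⟨hneg, h⟩
    rcases tailSum_quasiconvex (fun j => c' j - c j) hf h₁ h₂ h₁i hi₂ with h | h
    · exact h.trans (hmin₁ i' hi')
    · exact h.trans (hmin₂ i' hi')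
end

section
/- Let g, r, d be integers with r ≥ 3 and ρ := g − (r+1)(r+g−d) ≥ 0, and set t = min(ρ + (g+r−d), r−1). Suppose t < r−1, and suppose that either C(r+2,2) > 2d+1−g, or else C(r+2,2) = 2d+1−g and ρ > 0, where C(n,2) = n(n−1)/2. Then C(r+2,2) − (2d+1−g) ≥ r−1−t. -/
/-!
Put `s = r + g - d` and `ρ = g - (r + 1) s`, so that `2d + 1 - g = ρ + (r - 1) s + 2r + 1` and
`t = ρ + s`. Either case of the hypothesis gives `(r - 1) s < r (r - 1) / 2`, hence `2 s < r`, and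
by integrality `2 s ≤ r - 1`. The conclusion is equivalent to
`(r - 2) s ≤ (r - 1) (r - 2) / 2`, which is this bound multiplied by `r - 2`.
-/

theorem stmt_13 (g r d t : ℤ) (hr : 3 ≤ r)
    (hrho : 0 ≤ g - (r + 1) * (r + g - d))
    (ht : t = min (g - (r + 1) * (r + g - d) + (g + r - d)) (r - 1))
    (htlt : t < r - 1)
    (hcase : 2 * d + 1 - g < (r + 2) * (r + 1) / 2 ∨
      ((r + 2) * (r + 1) / 2 = 2 * d + 1 - g ∧ 0 < g - (r + 1) * (r + g - d))) :
    r - 1 - t ≤ (r + 2) * (r + 1) / 2 - (2 * d + 1 - g) := by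
  obtain ⟨k, hk⟩ : (2 : ℤ) ∣ (r + 2) * (r + 1) := by
    have h := Int.even_mul_succ_self (r + 1)
    rw [show (r + 2) * (r + 1) = (r + 1) * (r + 1 + 1) by ring]
    exact h.two_dvd
  have hdiv : (r + 2) * (r + 1) / 2 = k := by omega
  rw [hdiv] at hcase ⊢
  obtain ⟨s, hs⟩ : ∃ s, s = r + g - d := ⟨_, rfl⟩
  obtain ⟨ρ, hρ⟩ : ∃ ρ, ρ = g - (r + 1) * s := ⟨_, rfl⟩
  rw [← hs, ← hρ] at hrho ht hcase
  have htv : t = ρ + s := by omega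
  have hh : 2 * d + 1 - g = ρ + (r - 1) * s + 2 * r + 1 := by
    linear_combination -hρ + 2 * hs
  rw [hh] at hcase ⊢
  have hlt : (r - 1) * (2 * s) < (r - 1) * r := by
    rcases hcase with h | ⟨h, h'⟩ <;> nlinarith
  have hsr : 2 * s < r := lt_of_mul_lt_mul_left hlt (by omega)
  have hmul : 0 ≤ (r - 2) * (r - 1 - 2 * s) := mul_nonneg (by omega) (by omega)
  nlinarith
end

section
/- Let δ be a (g,r,d)-sequence in which the number of occurrences of 0 is at most one more than the number of occurrences of r. Write α = ⌊g/(r+1)⌋ and β = g − (r+1)α. Then each of the integers 0, 1, …, β−1 occurs exactly α+1 times in δ, and each of the integers β, β+1, …, r occurs exactly α times in δ. -/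
/-- In every prefix, a value `b` occurs at most as often as any smaller value `a`: the only step at
which this could break is one that appends `b`, and there it is the hypothesis. -/
lemma count_take_antitone (δ : List ℕ)
    (h : ∀ i : ℕ, ∀ hi : i < δ.length, ∀ j' : ℕ, j' < δ[i] →
      (δ.take (i + 1)).count (δ[i]) ≤ (δ.take (i + 1)).count j')
    {a b : ℕ} (hab : a < b) (n : ℕ) (hn : n ≤ δ.length) :
    (δ.take n).count b ≤ (δ.take n).count a := by
  induction n with
  | zero => simp
  | succ n ih =>
    have hn' : n < δ.length := hn
    by_cases hb : δ[n] = b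
    · have := h n hn' a (by rw [hb]; exact hab)
      rwa [hb] at this
    · have := ih hn'.le
      rw [List.take_succ_eq_append_getElem hn', List.count_append, List.count_append,
        List.count_eq_zero_of_not_mem (a := b) (l := [δ[n]]) (by simpa using Ne.symm hb)]
      omega

/-- A weakly decreasing sequence `c 0, …, c r` of total `g` that drops by at most one overall is
determined by division of `g` by `r + 1`. -/
lemma near_constant_antitone (c : ℕ → ℕ) (g r : ℕ)
    (hanti : ∀ a b : ℕ, a ≤ b → c b ≤ c a) (hdrop : c 0 ≤ c r + 1)
    (hsum : ∑ j ∈ Finset.range (r + 1), c j = g) (j : ℕ) (hj : j ≤ r) :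
    (j < g % (r + 1) → c j = g / (r + 1) + 1) ∧
      (g % (r + 1) ≤ j → c j = g / (r + 1)) := by
  set S := (Finset.range (r + 1)).filter (fun i => c r < c i) with hS
  have hval : ∀ i ∈ Finset.range (r + 1), c i = c r + if c r < c i then 1 else 0 := by
    intro i hi
    have h1 := hanti 0 i (Nat.zero_le i)
    have h2 := hanti i r (Nat.lt_succ_iff.mp (Finset.mem_range.mp hi))
    split_ifs <;> omega
  have hg : g = (r + 1) * c r + S.card := by
    rw [← hsum, Finset.sum_congr rfl hval, Finset.sum_add_distrib, hS, Finset.card_filter]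
    simp
  -- `S` is the initial segment of length `S.card`.
  have hmem : ∀ i, i ≤ r → (c r < c i ↔ i < S.card) := by
    intro i hi
    constructor
    · intro hlt
      have hsub : Finset.range (i + 1) ⊆ S := by
        intro x hx
        have hx' := Finset.mem_range.mp hx
        have := hanti x i (by omega)
        rw [hS, Finset.mem_filter, Finset.mem_range]
        omega
      simpa using Finset.card_le_card hsub
    · intro hlt
      by_contra hle
      have hsub : S ⊆ Finset.range i := by
        intro x hx
        rw [hS, Finset.mem_filter] at hx
        rw [Finset.mem_range]
        by_contra hxi
        have := hanti i x (by omega)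
        omega
      have := Finset.card_le_card hsub
      rw [Finset.card_range] at this
      omega
  have hcard : S.card < r + 1 := by
    have := hmem r le_rfl
    omega
  have hdiv : g / (r + 1) = c r := by
    rw [hg, Nat.mul_add_div (Nat.succ_pos r), Nat.div_eq_of_lt hcard, add_zero]
  have hmod : g % (r + 1) = S.card := by
    rw [hg, Nat.mul_add_mod, Nat.mod_eq_of_lt hcard]
  rw [hdiv, hmod]
  have h1 := hmem j hj
  have h2 := hanti 0 j (Nat.zero_le j)
  have h3 := hanti j r hj
  omega

theorem stmt_16 (g r d : ℕ) (δ : List ℕ) (h : IsGRDSeq g r d δ)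
    (hcount : δ.count 0 ≤ δ.count r + 1) :
    ∀ j : ℕ, j ≤ r →
      (j < g % (r + 1) → δ.count j = g / (r + 1) + 1) ∧
      (g % (r + 1) ≤ j → δ.count j = g / (r + 1)) := by
  obtain ⟨-, -, -, -, hlen, hle, -, hpre⟩ := h
  refine near_constant_antitone (fun j => δ.count j) g r ?_ hcount ?_
  · intro a b hab
    rcases hab.eq_or_lt with rfl | hlt
    · exact le_rfl
    · simpa using count_take_antitone δ hpre hlt δ.length le_rfl
  · have := Multiset.sum_count_eq_card (s := Finset.range (r + 1)) (m := (δ : Multiset ℕ))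
      (fun a ha => Finset.mem_range.mpr (Nat.lt_succ_of_le (hle a (by simpa using ha))))
    simpa [hlen] using this
end
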